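/- Let α be a real number with α > 0 and let q be a real number with 0 < q < 1, real exponents being interpreted via the real power function. Then: (1) ∑_{i,j≥0} q^{α i^2 + 2ij + α i + j} / ((q;q)_{2i} (q;q)_j) = (-q^{2α};q^{2α})_∞^2 · (q^{2α};q^{2α})_∞ / (q;q)_∞; (2) ∑_{i,j≥0} q^{α i^2 + 2ij + α i + 2j} / ((q;q)_{2i+1} (q;q)_j) = (-q^{2α};q^{2α})_∞^2 · (q^{2α};q^{2α})_∞ / (q;q)_∞. -/

import Mathlib

/-!
Summing over `j` first, Euler's series `∑ z^j / (q;q)_j` at `z = q^(m+1)` equals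
`(q;q)_m / (q;q)_∞` (`hasSum_euler`, `euler_mul_inf`), which cancels `(q;q)_{2i}`
(resp. `(q;q)_{2i+1}`) and reduces both double sums to `(∑ Q^(i(i+1)/2)) / (q;q)_∞`
with `Q = q^(2α)`.

What remains is Gauss's identity `∑ Q^(i(i+1)/2) = (-Q;Q)_∞² (Q;Q)_∞` (`hasSum_gauss`).  It is the
limit, by dominated convergence, of the finite identity (`finite_gauss`)
`∑_{i ≤ n} Q^(i(i+1)/2) (Q;Q)_{2n+1} / ((Q;Q)_{n-i} (Q;Q)_{n+1+i}) = (-Q;Q)_n²`,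
which follows by induction on `n`: the difference of consecutive instances telescopes in `i`
with an explicit antidifference (`gauss_telescope`).
-/

/-- Finite q-Pochhammer symbol `(a;q)_n = ∏_{k=0}^{n-1} (1 - a q^k)` over ℝ. -/
noncomputable def qPochR (a q : ℝ) (n : ℕ) : ℝ :=
  ∏ k ∈ Finset.range n, (1 - a * q ^ k)

/-- Infinite q-Pochhammer symbol `(a;q)_∞ = ∏_{k=0}^{∞} (1 - a q^k)` over ℝ. -/
noncomputable def qPochInfR (a q : ℝ) : ℝ :=
  ∏' k : ℕ, (1 - a * q ^ k)

open Filter Topology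

/-! ### Pochhammer symbols and Euler's series -/

section Pochhammer

variable {q : ℝ}

lemma qPochR_succ (q : ℝ) (n : ℕ) :
    qPochR q q (n + 1) = qPochR q q n * (1 - q ^ (n + 1)) := by
  simp only [qPochR, Finset.prod_range_succ, pow_succ']

lemma one_sub_pow_pos (h0 : 0 < q) (h1 : q < 1) (n : ℕ) : 0 < 1 - q ^ (n + 1) :=
  sub_pos.2 (pow_lt_one₀ h0.le h1 n.succ_ne_zero)

lemma qPochR_pos (h0 : 0 < q) (h1 : q < 1) (n : ℕ) : 0 < qPochR q q n := by
  induction n with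
  | zero => simp [qPochR]
  | succ n ih => rw [qPochR_succ]; exact mul_pos ih (one_sub_pow_pos h0 h1 n)

lemma qPochR_antitone (h0 : 0 < q) (h1 : q < 1) : Antitone (qPochR q q) :=
  antitone_nat_of_succ_le fun n => by
    rw [qPochR_succ]
    exact mul_le_of_le_one_right (qPochR_pos h0 h1 n).le (by linarith [pow_pos h0 (n + 1)])

lemma tendsto_qPochR (h0 : 0 < q) (h1 : q < 1) (a : ℝ) :
    Tendsto (qPochR a q) atTop (𝓝 (qPochInfR a q)) := by
  have hs : Summable fun k : ℕ => ‖-(a * q ^ k)‖ := by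
    simpa using ((summable_geometric_of_lt_one h0.le h1).mul_left a).norm
  have := (multipliable_one_add_of_summable hs).hasProd.tendsto_prod_nat
  simp only [← sub_eq_add_neg] at this
  exact this

lemma summable_euler (h0 : 0 < q) (h1 : q < 1) : Summable fun j : ℕ => q ^ j / qPochR q q j := by
  refine summable_of_ratio_test_tendsto_lt_one h1
    (Eventually.of_forall fun j => (div_pos (pow_pos h0 j) (qPochR_pos h0 h1 j)).ne') ?_
  have h : Tendsto (fun j : ℕ => q / (1 - q ^ (j + 1))) atTop (𝓝 (q / (1 - 0))) :=
    tendsto_const_nhds.div (tendsto_const_nhds.sub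
      ((tendsto_pow_atTop_nhds_zero_of_lt_one h0.le h1).comp (tendsto_add_atTop_nat 1)))
      (by norm_num)
  rw [sub_zero, div_one] at h
  refine h.congr fun j => ?_
  have hp := qPochR_pos h0 h1 j
  have hs := one_sub_pow_pos h0 h1 j
  rw [Real.norm_of_nonneg (div_pos (pow_pos h0 _) (qPochR_pos h0 h1 _)).le,
    Real.norm_of_nonneg (div_pos (pow_pos h0 _) (qPochR_pos h0 h1 _)).le, qPochR_succ]
  field_simp
  ring

/-- Iterating the functional equation `(1 - z) F(z) = F(q z)` of Euler's series
`F(z) = ∑ z^j / (q;q)_j` along `z = q, q², …`. -/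
lemma hasSum_euler (h0 : 0 < q) (h1 : q < 1) (m : ℕ) :
    HasSum (fun j : ℕ => (q ^ (m + 1)) ^ j / qPochR q q j)
      (qPochR q q m * ∑' j : ℕ, q ^ j / qPochR q q j) := by
  induction m with
  | zero => simpa [qPochR] using (summable_euler h0 h1).hasSum
  | succ m ih =>
    -- The terms of `F(z) - F(q z)` are those of `z F(z)` shifted by one, the zeroth being `0`.
    have hshift : HasSum (fun j : ℕ =>
        (q ^ (m + 1)) ^ j / qPochR q q j - (q ^ (m + 2)) ^ j / qPochR q q j)
        (q ^ (m + 1) * (qPochR q q m * ∑' j : ℕ, q ^ j / qPochR q q j)) := by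
      rw [← hasSum_nat_add_iff' 1]
      have h2 := ih.mul_left (q ^ (m + 1))
      simp only [Finset.sum_range_one, pow_zero, sub_self, sub_zero]
      refine (congrArg (HasSum · _) (funext fun j => ?_)).mpr h2
      have hp := qPochR_pos h0 h1 j
      have hs := one_sub_pow_pos h0 h1 j
      rw [qPochR_succ]
      field_simp
      ring
    have := ih.sub hshift
    rw [qPochR_succ]
    simpa only [sub_sub_cancel, mul_sub, mul_one, sub_mul, mul_assoc, mul_left_comm] using this

lemma euler_mul_inf (h0 : 0 < q) (h1 : q < 1) :
    qPochInfR q q * ∑' j : ℕ, q ^ j / qPochR q q j = 1 := by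
  have hL := (tendsto_qPochR h0 h1 q).mul_const (∑' j : ℕ, q ^ j / qPochR q q j)
  refine tendsto_nhds_unique hL ?_
  simp only [← fun m => (hasSum_euler h0 h1 m).tsum_eq]
  have hpow : Tendsto (fun m : ℕ => q ^ (m + 1)) atTop (𝓝 0) :=
    (tendsto_pow_atTop_nhds_zero_of_lt_one h0.le h1).comp (tendsto_add_atTop_nat 1)
  have key := tendsto_tsum_of_dominated_convergence (𝓕 := atTop)
    (f := fun (m j : ℕ) => (q ^ (m + 1)) ^ j / qPochR q q j)
    (g := fun j : ℕ => (0 : ℝ) ^ j / qPochR q q j) (summable_euler h0 h1)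
    (fun j => (hpow.pow j).div_const _)
    (Eventually.of_forall fun m j => by
      have hp := qPochR_pos h0 h1 j
      rw [Real.norm_of_nonneg (by positivity)]
      have : q ^ (m + 1) ≤ q := pow_le_of_le_one h0.le h1.le m.succ_ne_zero
      gcongr)
  have h01 : (∑' j : ℕ, (0 : ℝ) ^ j / qPochR q q j) = 1 := by
    rw [tsum_eq_single 0 (fun j hj => by simp [hj])]
    simp [qPochR]
  rwa [h01] at key

lemma qPochInfR_pos (h0 : 0 < q) (h1 : q < 1) : 0 < qPochInfR q q := by
  have hn : 0 ≤ qPochInfR q q :=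
    ge_of_tendsto' (tendsto_qPochR h0 h1 q) fun n => (qPochR_pos h0 h1 n).le
  refine hn.lt_of_ne fun h => ?_
  have := euler_mul_inf h0 h1
  simp [← h] at this

lemma qPochInfR_le (h0 : 0 < q) (h1 : q < 1) (n : ℕ) : qPochInfR q q ≤ qPochR q q n :=
  (qPochR_antitone h0 h1).le_of_tendsto (tendsto_qPochR h0 h1 q) n

end Pochhammer

/-! ### Gauss's triangular number series -/

section Gauss

variable {q : ℝ}

lemma triangle_succ (i : ℕ) : (i + 1) * (i + 1 + 1) / 2 = i * (i + 1) / 2 + (i + 1) := by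
  rw [show (i + 1) * (i + 1 + 1) = i * (i + 1) + (i + 1) * 2 by ring,
    Nat.add_mul_div_right _ _ two_pos]

/-- Telescoping identity behind the recurrence in `n` of
`∑ q^(i(i+1)/2) / ((q;q)_{n-i} (q;q)_{n+1+i})`. The antidifference is the rational multiple
`q^(n+1) (1 - q^(-I)) (1 - q^(n+2+I))` of the summand at `n + 1`; both sides carry a factor `q^I`
so that no negative power of `q` appears. -/
lemma gauss_telescope (h0 : 0 < q) (h1 : q < 1) (n I : ℕ) (hI : I ≤ n + 1) :
    q ^ I * ∑ i ∈ Finset.range I,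
      ((1 - q ^ (2 * n + 3)) * (1 - q ^ (n + 1)) *
          (q ^ (i * (i + 1) / 2) / (qPochR q q (n + 1 - i) * qPochR q q (n + 2 + i))) -
        (1 + q ^ (n + 1)) *
          (q ^ (i * (i + 1) / 2) / (qPochR q q (n - i) * qPochR q q (n + 1 + i)))) =
      -(q ^ (n + 1) * (1 - q ^ I) * q ^ (I * (I + 1) / 2) /
        (qPochR q q (n + 1 - I) * qPochR q q (n + 1 + I))) := by
  induction I with
  | zero => simp
  | succ I ih =>
    obtain ⟨m, rfl⟩ : ∃ m, n = I + m := ⟨n - I, by omega⟩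
    have ih := ih (by omega)
    rw [Finset.sum_range_succ, triangle_succ, pow_add q (I * (I + 1) / 2), pow_succ q I, mul_right_comm, mul_add, ih]
    rw [show I + m + 1 - I = m + 1 by omega, show I + m - I = m by omega,
      show I + m + 1 - (I + 1) = m by omega,
      show I + m + 1 + (I + 1) = (I + m + 1 + I) + 1 by omega,
      show I + m + 2 + I = (I + m + 1 + I) + 1 by omega, qPochR_succ, qPochR_succ]
    have hp := qPochR_pos h0 h1 m
    have hp2 := qPochR_pos h0 h1 (I + m + 1 + I)
    have hs := one_sub_pow_pos h0 h1 m
    have hs2 := one_sub_pow_pos h0 h1 (I + m + 1 + I)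
    generalize qPochR q q m = A at *
    generalize qPochR q q (I + m + 1 + I) = B at *
    generalize q ^ (I * (I + 1) / 2) = T at *
    field_simp
    ring

lemma finite_gauss (h0 : 0 < q) (h1 : q < 1) (n : ℕ) :
    qPochR q q (2 * n + 1) * ∑ i ∈ Finset.range (n + 1),
      q ^ (i * (i + 1) / 2) / (qPochR q q (n - i) * qPochR q q (n + 1 + i)) =
      qPochR (-q) q n ^ 2 := by
  induction n with
  | zero =>
    have : 1 - q ≠ 0 := by linarith
    simp [qPochR, this]
  | succ n ih =>
    have ht := gauss_telescope h0 h1 n (n + 1) le_rfl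
    rw [Finset.sum_sub_distrib, ← Finset.mul_sum, ← Finset.mul_sum] at ht
    rw [Finset.sum_range_succ]
    have hneg : qPochR (-q) q (n + 1) = qPochR (-q) q n * (1 + q ^ (n + 1)) := by
      simp only [qPochR, Finset.prod_range_succ]; ring
    rw [hneg, mul_pow, ← ih]
    rw [Nat.sub_self, show n + 1 + (n + 1) = 2 * n + 2 by ring] at ht
    rw [Nat.sub_self, show n + 1 + 1 + (n + 1) = 2 * n + 1 + 1 + 1 by ring,
      show 2 * (n + 1) + 1 = 2 * n + 1 + 1 + 1 by ring, qPochR_succ, qPochR_succ]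
    rw [show 2 * n + 2 = 2 * n + 1 + 1 by ring, qPochR_succ] at ht
    rw [show n + 1 + 1 = n + 2 by ring]
    have hp := qPochR_pos h0 h1 (2 * n + 1)
    have hs := one_sub_pow_pos h0 h1 (2 * n + 1)
    have hs2 := one_sub_pow_pos h0 h1 (2 * n + 1 + 1)
    have hs3 := one_sub_pow_pos h0 h1 n
    have hq : 0 < q ^ (n + 1) := pow_pos h0 _
    have hz : qPochR q q 0 = 1 := by simp [qPochR]
    rw [hz, one_mul] at ht
    rw [hz]
    generalize (∑ i ∈ Finset.range (n + 1),
      q ^ (i * (i + 1) / 2) / (qPochR q q (n + 1 - i) * qPochR q q (n + 2 + i))) = X at *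
    generalize (∑ i ∈ Finset.range (n + 1),
      q ^ (i * (i + 1) / 2) / (qPochR q q (n - i) * qPochR q q (n + 1 + i))) = Y at *
    generalize qPochR q q (2 * n + 1) = A at *
    generalize q ^ ((n + 1) * (n + 2) / 2) = T at *
    have e1 : q ^ (2 * n + 1 + 1) = (q ^ (n + 1)) ^ 2 := by ring
    have e2 : q ^ (2 * n + 1 + 1 + 1) = q * (q ^ (n + 1)) ^ 2 := by ring
    have e3 : q ^ (2 * n + 3) = q * (q ^ (n + 1)) ^ 2 := by ring
    rw [e1] at hs ht
    rw [e2] at hs2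
    rw [e3] at ht
    rw [e1, e2]
    generalize q ^ (n + 1) = N at *
    have hN : 1 + N ≠ 0 := by positivity
    have ht' : (1 - q * N ^ 2) * (1 - N) * X = (1 + N) * Y - (1 - N) * T / (A * (1 - N ^ 2)) := by
      apply mul_left_cancel₀ hq.ne'
      linear_combination ht
    -- The term `i = n + 1`, absent from the telescoped range, cancels the boundary term.
    have hT : A * (1 - N ^ 2) * (1 - q * N ^ 2) * (T / (1 * (A * (1 - N ^ 2) * (1 - q * N ^ 2))))
        = T := by rw [one_mul]; exact mul_div_cancel₀ T (by positivity)
    have hT2 : A * (1 + N) * ((1 - N) * T / (A * (1 - N ^ 2))) = T := by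
      rw [mul_div_assoc', div_eq_iff (by positivity)]; ring
    rw [mul_add, hT]
    linear_combination A * (1 + N) * ht' - hT2

lemma hasSum_gauss (h0 : 0 < q) (h1 : q < 1) :
    HasSum (fun i : ℕ => q ^ (i * (i + 1) / 2)) (qPochInfR (-q) q ^ 2 * qPochInfR q q) := by
  have hpos := qPochInfR_pos h0 h1
  have htri : ∀ i : ℕ, i ≤ i * (i + 1) / 2 := fun i => by
    induction i with
    | zero => simp
    | succ i ih => rw [triangle_succ]; omega
  have hsum : Summable fun i : ℕ => q ^ (i * (i + 1) / 2) :=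
    Summable.of_nonneg_of_le (fun i => by positivity)
      (fun i => pow_le_pow_of_le_one h0.le h1.le (htri i)) (summable_geometric_of_lt_one h0.le h1)
  have hP := tendsto_qPochR h0 h1 q
  have key := tendsto_tsum_of_dominated_convergence (𝓕 := atTop)
    (f := fun (n i : ℕ) => if i < n + 1 then qPochR q q (2 * n + 1) *
      (q ^ (i * (i + 1) / 2) / (qPochR q q (n - i) * qPochR q q (n + 1 + i))) else 0)
    (g := fun i : ℕ => qPochInfR q q * (q ^ (i * (i + 1) / 2) / (qPochInfR q q * qPochInfR q q)))
    (bound := fun i => q ^ (i * (i + 1) / 2) / qPochInfR q q) (hsum.div_const _)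
    (fun i => by
      have ha : Tendsto (fun n : ℕ => 2 * n + 1) atTop atTop :=
        tendsto_atTop_mono (fun n => by simp only [id]; omega) tendsto_id
      have hb : Tendsto (fun n : ℕ => n - i) atTop atTop := tendsto_sub_atTop_nat i
      have hc : Tendsto (fun n : ℕ => n + 1 + i) atTop atTop :=
        tendsto_atTop_mono (fun n => by simp only [id]; omega) tendsto_id
      refine ((hP.comp ha).mul (tendsto_const_nhds.div ((hP.comp hb).mul (hP.comp hc))
        (by positivity))).congr' ?_
      filter_upwards [eventually_ge_atTop i] with n hn
      simp [Nat.lt_succ_of_le hn])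
    (Eventually.of_forall fun n i => by
      have hA := qPochR_pos h0 h1 (2 * n + 1)
      have hB := qPochR_pos h0 h1 (n - i)
      have hC := qPochR_pos h0 h1 (n + 1 + i)
      split_ifs with hi
      · rw [Real.norm_of_nonneg (by positivity)]
        have hAC : qPochR q q (2 * n + 1) ≤ qPochR q q (n + 1 + i) :=
          qPochR_antitone h0 h1 (by omega)
        calc _ ≤ qPochR q q (n + 1 + i) *
              (q ^ (i * (i + 1) / 2) / (qPochR q q (n - i) * qPochR q q (n + 1 + i))) := by gcongr
          _ = q ^ (i * (i + 1) / 2) / qPochR q q (n - i) := by field_simp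
          _ ≤ _ := by
            have := qPochInfR_le h0 h1 (n - i)
            gcongr
      · rw [norm_zero]; positivity)
  have hfin : ∀ n : ℕ, (∑' i : ℕ, if i < n + 1 then qPochR q q (2 * n + 1) *
      (q ^ (i * (i + 1) / 2) / (qPochR q q (n - i) * qPochR q q (n + 1 + i))) else 0) =
      qPochR (-q) q n ^ 2 := fun n => by
    rw [← finite_gauss h0 h1 n, Finset.mul_sum,
      tsum_eq_sum (s := Finset.range (n + 1)) (fun i hi => if_neg (by simpa using hi))]
    exact Finset.sum_congr rfl fun i hi => if_pos (Finset.mem_range.1 hi)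
  simp only [hfin] at key
  have hlim := tendsto_nhds_unique key ((tendsto_qPochR h0 h1 (-q)).pow 2)
  rw [← hlim, ← tsum_mul_right]
  have hterm : ∀ i : ℕ, qPochInfR q q * (q ^ (i * (i + 1) / 2) /
      (qPochInfR q q * qPochInfR q q)) * qPochInfR q q = q ^ (i * (i + 1) / 2) := fun i => by
    field_simp
  simp only [hterm]
  exact hsum.hasSum

end Gauss

/-! ### The double sums -/

/-- Summation over `j` by Euler's series, for weights `c i` and Pochhammer indices `m i`. -/
lemma hasSum_double {q : ℝ} (h0 : 0 < q) (h1 : q < 1) {c : ℕ → ℝ} (hc : ∀ i, 0 ≤ c i) {S : ℝ}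
    (hS : HasSum c S) (m : ℕ → ℕ) :
    HasSum (fun p : ℕ × ℕ => c p.1 * (q ^ (m p.1 + 1)) ^ p.2 /
      (qPochR q q (m p.1) * qPochR q q p.2)) (S / qPochInfR q q) := by
  have hinf := qPochInfR_pos h0 h1
  have hE : (∑' j : ℕ, q ^ j / qPochR q q j) = 1 / qPochInfR q q := by
    rw [eq_div_iff hinf.ne', mul_comm]; exact euler_mul_inf h0 h1
  have hin : ∀ i, HasSum (fun j : ℕ => c i * (q ^ (m i + 1)) ^ j /
      (qPochR q q (m i) * qPochR q q j)) (c i / qPochInfR q q) := fun i => by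
    have hp := qPochR_pos h0 h1 (m i)
    have h := (hasSum_euler h0 h1 (m i)).mul_left (c i / qPochR q q (m i))
    rw [hE, show c i / qPochR q q (m i) * (qPochR q q (m i) * (1 / qPochInfR q q)) =
      c i / qPochInfR q q by field_simp] at h
    simpa only [div_mul_div_comm] using h
  have hsum : Summable (fun p : ℕ × ℕ => c p.1 * (q ^ (m p.1 + 1)) ^ p.2 /
      (qPochR q q (m p.1) * qPochR q q p.2)) := by
    refine (summable_prod_of_nonneg fun p => ?_).2 ⟨fun i => (hin i).summable, ?_⟩
    · have h2 := qPochR_pos h0 h1 (m p.1)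
      have h3 := qPochR_pos h0 h1 p.2
      have h4 := hc p.1
      simp only [Pi.zero_apply]
      positivity
    · simp only [fun i => (hin i).tsum_eq]
      exact (hS.div_const _).summable
  have := hsum.hasSum.prod_fiberwise hin
  rw [← this.unique (hS.div_const _)]
  exact hsum.hasSum

/-- For `m = 2i` and `m = 2i + 1` the right-hand exponent is that of the two double sums. -/
lemma rpow_exponent {q : ℝ} (h0 : 0 < q) (α : ℝ) (i m j : ℕ) :
    (q ^ (2 * α)) ^ (i * (i + 1) / 2) * (q ^ (m + 1)) ^ j =
      q ^ (α * (i : ℝ) ^ 2 + α * i + (m + 1) * j) := by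
  have ht : (((i * (i + 1) / 2 : ℕ) : ℝ)) = i * (i + 1) / 2 := by
    rw [Nat.cast_div (Nat.even_mul_succ_self i).two_dvd (by norm_num)]; push_cast; ring
  rw [← pow_mul, ← Real.rpow_natCast, ← Real.rpow_natCast q, ← Real.rpow_mul h0.le,
    ← Real.rpow_add h0, ht]
  push_cast
  congr 1
  ring

/-- Identities (3.1) and (3.2): for every `α > 0` and `0 < q < 1`,
`∑_{i,j≥0} q^{α i² + 2ij + α i + j}/((q;q)_{2i}(q;q)_j)
  = (-q^{2α};q^{2α})_∞² (q^{2α};q^{2α})_∞ / (q;q)_∞` and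
`∑_{i,j≥0} q^{α i² + 2ij + α i + 2j}/((q;q)_{2i+1}(q;q)_j)
  = (-q^{2α};q^{2α})_∞² (q^{2α};q^{2α})_∞ / (q;q)_∞`,
real exponents taken via `Real.rpow`. -/
theorem rank_two_partial_Nahm_alpha10 (α : ℝ) (hα : 0 < α)
    (q : ℝ) (hq0 : 0 < q) (hq1 : q < 1) :
    (∑' p : ℕ × ℕ,
        q ^ (α * (p.1 : ℝ) ^ 2 + 2 * (p.1 : ℝ) * (p.2 : ℝ) + α * (p.1 : ℝ) + (p.2 : ℝ)) /
          (qPochR q q (2 * p.1) * qPochR q q p.2)) =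
      qPochInfR (-(q ^ (2 * α))) (q ^ (2 * α)) ^ 2 * qPochInfR (q ^ (2 * α)) (q ^ (2 * α)) /
        qPochInfR q q ∧
    (∑' p : ℕ × ℕ,
        q ^ (α * (p.1 : ℝ) ^ 2 + 2 * (p.1 : ℝ) * (p.2 : ℝ) + α * (p.1 : ℝ) + 2 * (p.2 : ℝ)) /
          (qPochR q q (2 * p.1 + 1) * qPochR q q p.2)) =
      qPochInfR (-(q ^ (2 * α))) (q ^ (2 * α)) ^ 2 * qPochInfR (q ^ (2 * α)) (q ^ (2 * α)) /
        qPochInfR q q := by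
  have hQ0 : 0 < q ^ (2 * α) := Real.rpow_pos_of_pos hq0 _
  have hQ1 : q ^ (2 * α) < 1 := Real.rpow_lt_one hq0.le hq1 (by positivity)
  have hG := hasSum_gauss hQ0 hQ1
  have hc : ∀ i : ℕ, 0 ≤ (q ^ (2 * α)) ^ (i * (i + 1) / 2) := fun i => by positivity
  refine ⟨?_, ?_⟩
  · rw [← (hasSum_double hq0 hq1 hc hG fun i => 2 * i).tsum_eq]
    refine tsum_congr fun p => ?_
    rw [rpow_exponent hq0]
    congr 2
    push_cast
    ring
  · rw [← (hasSum_double hq0 hq1 hc hG fun i => 2 * i + 1).tsum_eq]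
    refine tsum_congr fun p => ?_
    rw [rpow_exponent hq0]
    congr 2
    push_cast
    ring
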